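/- Let d ≥ 1, let N ≥ 2, and let x_1, …, x_N be pairwise distinct points in ℝ^d with m := min_{i ≠ j} ‖x_i − x_j‖ > 0. Let π_1, …, π_N be weights with π_j > 0 for all j and ∑_{j=1}^N π_j = 1. Then for every bandwidth vector σ ∈ (0, ∞)^N, the weighted leave-one-out total log-likelihood satisfies ∑_{i=1}^N log( ∑_{j ≠ i} π_j · K_{σ_j}(x_i, x_j) ) ≤ N · log( (2π)^{-d/2} · d^{d/2} · e^{-d/2} · m^{-d} ). In particular the LOO-MLL objective for π-KDE is bounded above. -/

import Mathlib

/-- The isotropic Gaussian kernel on `ℝ^d` with center `μ` and bandwidth `σ`: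
`K_σ(x, μ) = (2πσ²)^{-d/2} · exp(−‖x − μ‖² / (2σ²))`. -/
noncomputable def gaussKernel (d : ℕ) (σ : ℝ) (x μ : EuclideanSpace ℝ (Fin d)) : ℝ :=
  (2 * Real.pi * σ ^ 2) ^ (-(d : ℝ) / 2) * Real.exp (-‖x - μ‖ ^ 2 / (2 * σ ^ 2))

lemma gaussKernel_pos_aux (d : ℕ) (s : ℝ) (hs : 0 < s) (a b : EuclideanSpace ℝ (Fin d)) :
    0 < gaussKernel d s a b := by
  have := Real.pi_pos
  unfold gaussKernel
  positivity

lemma gaussKernel_le_aux (d : ℕ) (hd : 1 ≤ d) (s : ℝ) (hs : 0 < s) (m : ℝ) (hm : 0 < m)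
    (a b : EuclideanSpace ℝ (Fin d)) (hab : m ≤ ‖a - b‖) :
    gaussKernel d s a b ≤ (2 * Real.pi) ^ (-(d : ℝ) / 2) *
        (d : ℝ) ^ ((d : ℝ) / 2) * Real.exp (-(d : ℝ) / 2) * m ^ (-(d : ℝ)) := by
  have hpi := Real.pi_pos
  have hd0 : (0 : ℝ) < d := by exact_mod_cast hd
  have h2 : (0 : ℝ) < 2 * Real.pi := by positivity
  unfold gaussKernel
  rw [Real.rpow_def_of_pos (by positivity : 0 < 2 * Real.pi * s ^ 2),
    Real.rpow_def_of_pos h2, Real.rpow_def_of_pos hd0, Real.rpow_def_of_pos hm,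
    ← Real.exp_add, ← Real.exp_add, ← Real.exp_add, ← Real.exp_add, Real.exp_le_exp,
    Real.log_mul h2.ne' (by positivity), Real.log_pow]
  have h1 : Real.log (m ^ 2 / (d * s ^ 2)) ≤ m ^ 2 / (d * s ^ 2) - 1 :=
    Real.log_le_sub_one_of_pos (by positivity)
  rw [Real.log_div (by positivity) (by positivity), Real.log_mul hd0.ne' (by positivity),
    Real.log_pow, Real.log_pow] at h1
  have h3 : -‖a - b‖ ^ 2 / (2 * s ^ 2) ≤ -m ^ 2 / (2 * s ^ 2) := by
    gcongr
  have h4 := mul_le_mul_of_nonneg_left h1 (by positivity : (0 : ℝ) ≤ d / 2)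
  have h5 : (d : ℝ) / 2 * (m ^ 2 / (d * s ^ 2) - 1) = -(-m ^ 2 / (2 * s ^ 2)) - d / 2 := by
    field_simp
  rw [h5] at h4
  push_cast at h4 ⊢
  nlinarith [h3, h4]

/-- For pairwise distinct data points with minimum pairwise distance `m > 0` and positive
kernel weights summing to one, the leave-one-out total log-likelihood for π-KDE is bounded
above by `N · log ((2π)^{-d/2} · d^{d/2} · e^{-d/2} · m^{-d})` for every positive bandwidth
vector. -/
theorem pikde_loo_mll_bounded_above
    (d N : ℕ) (hd : 1 ≤ d) (hN : 2 ≤ N)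
    (x : Fin N → EuclideanSpace ℝ (Fin d)) (hx : Function.Injective x)
    (m : ℝ) (hm : IsLeast {r : ℝ | ∃ i j : Fin N, i ≠ j ∧ r = ‖x i - x j‖} m) (hm0 : 0 < m)
    (w : Fin N → ℝ) (hw : ∀ j, 0 < w j) (hwsum : ∑ j, w j = 1)
    (σ : Fin N → ℝ) (hσ : ∀ j, 0 < σ j) :
    ∑ i, Real.log (∑ j ∈ Finset.univ.erase i, w j * gaussKernel d (σ j) (x i) (x j)) ≤
      (N : ℝ) * Real.log ((2 * Real.pi) ^ (-(d : ℝ) / 2) *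
        (d : ℝ) ^ ((d : ℝ) / 2) * Real.exp (-(d : ℝ) / 2) * m ^ (-(d : ℝ))) := by
  set B := (2 * Real.pi) ^ (-(d : ℝ) / 2) *
        (d : ℝ) ^ ((d : ℝ) / 2) * Real.exp (-(d : ℝ) / 2) * m ^ (-(d : ℝ)) with hB
  have hd0 : (0 : ℝ) < d := by exact_mod_cast hd
  have hB0 : 0 < B := by
    have := Real.pi_pos
    positivity
  have key : ∀ i ∈ (Finset.univ : Finset (Fin N)),
      Real.log (∑ j ∈ Finset.univ.erase i, w j * gaussKernel d (σ j) (x i) (x j))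
        ≤ Real.log B := by
    intro i _
    apply Real.log_le_log
    · apply Finset.sum_pos
      · intro j _
        exact mul_pos (hw j) (gaussKernel_pos_aux d _ (hσ j) _ _)
      · rw [← Finset.card_pos, Finset.card_erase_of_mem (Finset.mem_univ i), Finset.card_univ,
          Fintype.card_fin]
        omega
    · calc ∑ j ∈ Finset.univ.erase i, w j * gaussKernel d (σ j) (x i) (x j)
          ≤ ∑ j ∈ Finset.univ.erase i, w j * B := by
            apply Finset.sum_le_sum
            intro j hj
            apply mul_le_mul_of_nonneg_left _ (hw j).le
            exact gaussKernel_le_aux d hd _ (hσ j) m hm0 _ _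
              (hm.2 ⟨i, j, (Finset.ne_of_mem_erase hj).symm, rfl⟩)
        _ ≤ ∑ j, w j * B := by
            apply Finset.sum_le_sum_of_subset_of_nonneg (Finset.erase_subset _ _)
            intro j _ _
            exact (mul_pos (hw j) hB0).le
        _ = B := by rw [← Finset.sum_mul, hwsum, one_mul]
  calc _ ≤ ∑ _i : Fin N, Real.log B := Finset.sum_le_sum key
    _ = (N : ℝ) * Real.log B := by simp
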